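/- arXiv:1203.3619 — 2 statements merged into one kernel-verified Lean document; each statement's English description precedes it below -/
import Mathlib

section
/- In Stage One of SHALE, the supply duals are pointwise nondecreasing across iterations: for all iterations t and all impressions i, β^t_i ≤ β^{t+1}_i. -/
open Finset Filter Topology

noncomputable section

variable {I J : Type*} [Fintype I] [Fintype J]

open Classical in
/-- Γ(j): the impressions eligible for contract `j`. -/
def GammaD (adj : I → J → Prop) (j : J) : Finset I :=
  Finset.univ.filter (fun i => adj i j)

open Classical in
/-- Γ(i): the contracts eligible for impression `i`. -/
def GammaS (adj : I → J → Prop) (i : I) : Finset J :=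
  Finset.univ.filter (fun j => adj i j)

/-- Total eligible supply `S_j = ∑_{i ∈ Γ(j)} s_i`. -/
def Stot (adj : I → J → Prop) (s : I → ℝ) (j : J) : ℝ :=
  ∑ i ∈ GammaD adj j, s i

/-- Target `θ_{ij} = d_j / S_j` (independent of `i`). -/
def theta (adj : I → J → Prop) (s : I → ℝ) (d : J → ℝ) (j : J) : ℝ :=
  d j / Stot adj s j

/-- `g_{ij}(z) = max {0, θ_{ij} (1 + z / V_j)}` (independent of `i`). -/
def gfun (adj : I → J → Prop) (s : I → ℝ) (d V : J → ℝ) (j : J) (z : ℝ) : ℝ :=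
  max 0 ((theta adj s d j) * (1 + z / V j))

/-- `b` is a valid supply dual `β_i` for demand duals `α`: `b ≥ 0` and either `b = 0` with
`∑_{j ∈ Γ(i)} g_{ij}(α_j) ≤ 1`, or `∑_{j ∈ Γ(i)} g_{ij}(α_j − b) = 1`. -/
def BetaSpec (adj : I → J → Prop) (s : I → ℝ) (d V : J → ℝ)
    (α : J → ℝ) (i : I) (b : ℝ) : Prop :=
  0 ≤ b ∧ ((b = 0 ∧ ∑ j ∈ GammaS adj i, gfun adj s d V j (α j) ≤ 1) ∨
    ∑ j ∈ GammaS adj i, gfun adj s d V j (α j - b) = 1)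

/-- Stage One of SHALE: `α⁰ = 0`; `β^t_i` is a valid supply dual for `α^t`; and
`α^{t+1}_j = min (p_j) a_j` where `a_j` solves `∑_{i ∈ Γ(j)} s_i g_{ij}(a_j − β^t_i) = d_j`. -/
def StageOne (adj : I → J → Prop) (s : I → ℝ) (d p V : J → ℝ)
    (α : ℕ → J → ℝ) (β : ℕ → I → ℝ) : Prop :=
  (∀ j, α 0 j = 0) ∧
  (∀ t i, BetaSpec adj s d V (α t) i (β t i)) ∧
  (∀ t j, ∃ a : ℝ,
    (∑ i ∈ GammaD adj j, s i * gfun adj s d V j (a - β t i) = d j) ∧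
    α (t + 1) j = min (p j) a)

/-- Projected delivery `d_j(α) = ∑_{i ∈ Γ(j)} s_i g_{ij}(α_j − β_i)`. -/
def Dproj (adj : I → J → Prop) (s : I → ℝ) (d V : J → ℝ)
    (α : J → ℝ) (β : I → ℝ) (j : J) : ℝ :=
  ∑ i ∈ GammaD adj j, s i * gfun adj s d V j (α j - β i)

/-- The objective of the allocation problem. -/
def Fobj (adj : I → J → Prop) (s : I → ℝ) (d p V : J → ℝ)
    (x : I → J → ℝ) (u : J → ℝ) : ℝ :=
  (1 / 2) * ∑ j, ∑ i ∈ GammaD adj j,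
      s i * (V j / theta adj s d j) * (x i j - theta adj s d j) ^ 2
    + ∑ j, p j * u j

/-- Feasibility for the allocation problem. -/
def Feasible (adj : I → J → Prop) (s : I → ℝ) (d : J → ℝ)
    (x : I → J → ℝ) (u : J → ℝ) : Prop :=
  (∀ j, d j ≤ ∑ i ∈ GammaD adj j, s i * x i j + u j) ∧
  (∀ i, ∑ j ∈ GammaS adj i, x i j ≤ 1) ∧
  (∀ i j, adj i j → 0 ≤ x i j) ∧
  (∀ j, 0 ≤ u j)

/-- The KKT conditions for duals `(α, β)`. -/
def KKT (adj : I → J → Prop) (s : I → ℝ) (d p V : J → ℝ)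
    (α : J → ℝ) (β : I → ℝ) : Prop :=
  (∀ j, 0 ≤ α j ∧ α j ≤ p j) ∧
  (∀ i, 0 ≤ β i ∧ (∑ j ∈ GammaS adj i, gfun adj s d V j (α j - β i) ≤ 1) ∧
    (0 < β i → ∑ j ∈ GammaS adj i, gfun adj s d V j (α j - β i) = 1)) ∧
  (∀ j, (∑ i ∈ GammaD adj j, s i * gfun adj s d V j (α j - β i) ≤ d j) ∧
    (α j < p j → ∑ i ∈ GammaD adj j, s i * gfun adj s d V j (α j - β i) = d j))

/-!
Each half-step of Stage One is monotone: `β` is nondecreasing in `α`, and `α` is nondecreasing in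
`β`. Since `α⁰ = 0` without any supply dual delivers exactly the demands, while `β⁰ ≥ 0`, the first
step can only raise `α`; induction then propagates `α^t ≤ α^{t+1}` to all later steps.

Monotonicity of the half-steps is a comparison of two weighted sums of values of the `g_{ij}`. The
`g_{ij}` are strictly increasing only where they are positive, but the sums to be compared equal
`1` or `d_j > 0`, so at least one of their terms is positive.
-/

section StrictMonoWherePos

variable {X R : Type*}

/-- Functions that are monotone, and strictly monotone on the set where they are positive: the
regularity of a truncation `max 0 h` of a strictly increasing function `h`. -/
structure StrictMonoWherePos [Preorder X] [Zero R] [Preorder R] (f : X → R) : Prop where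
  monotone : Monotone f
  strictMonoOn : StrictMonoOn f {x | 0 < f x}

theorem strictMonoWherePos_max_zero [PartialOrder X] [Zero R] [LinearOrder R]
    {h : X → R} (hh : StrictMono h) : StrictMonoWherePos fun x => max 0 (h x) where
  monotone := monotone_const.max hh.monotone
  strictMonoOn := fun _ _ _ hy hxy =>
    max_lt_max_right_iff.2 ⟨hh hxy, (lt_max_iff.1 hy).resolve_left (lt_irrefl 0)⟩

theorem StrictMonoWherePos.const_mul [Preorder X] [Semiring R] [LinearOrder R]
    [IsStrictOrderedRing R] {f : X → R} (hf : StrictMonoWherePos f) {c : R} (hc : 0 ≤ c) :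
    StrictMonoWherePos fun x => c * f x where
  monotone := hf.monotone.const_mul hc
  strictMonoOn := fun _ hx _ hy hxy =>
    mul_lt_mul_of_pos_left
      (hf.strictMonoOn (pos_of_mul_pos_right hx hc) (pos_of_mul_pos_right hy hc) hxy)
      (hc.lt_of_ne' (left_ne_zero_of_mul (ne_of_gt hx)))

theorem exists_le_of_sum_le_of_strictMonoWherePos [LinearOrder X] [AddCommMonoid R]
    [LinearOrder R] [IsOrderedCancelAddMonoid R] {K : Type*} {A : Finset K} {f : K → X → R}
    (hf : ∀ k ∈ A, StrictMonoWherePos (f k)) {x y : K → X}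
    (hpos : 0 < ∑ k ∈ A, f k (x k)) (hle : ∑ k ∈ A, f k (y k) ≤ ∑ k ∈ A, f k (x k)) :
    ∃ k ∈ A, y k ≤ x k := by
  by_contra! hxy
  have hmono : ∀ k ∈ A, f k (x k) ≤ f k (y k) := fun k hk => (hf k hk).monotone (hxy k hk).le
  obtain ⟨k, hk, hxpos⟩ : ∃ k ∈ A, 0 < f k (x k) :=
    exists_lt_of_sum_lt (by simpa only [sum_const_zero] using hpos)
  have hstrict : f k (x k) < f k (y k) :=
    (hf k hk).strictMonoOn hxpos (hxpos.trans_le (hmono k hk)) (hxy k hk)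
  exact hle.not_gt (sum_lt_sum hmono ⟨k, hk, hstrict⟩)

end StrictMonoWherePos

section DemandSide

variable {I J : Type*} [Fintype I] {adj : I → J → Prop} {s : I → ℝ} {d V : J → ℝ} {j : J}

theorem theta_pos (hd : 0 < d j) (hS : 0 < Stot adj s j) : 0 < theta adj s d j :=
  div_pos hd hS

theorem strictMonoWherePos_gfun (hθ : 0 < theta adj s d j) (hV : 0 < V j) :
    StrictMonoWherePos (gfun adj s d V j) :=
  strictMonoWherePos_max_zero fun _ _ hxy => by gcongr

theorem gfun_zero (hθ : 0 ≤ theta adj s d j) : gfun adj s d V j 0 = theta adj s d j := by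
  simp [gfun, hθ]

theorem Dproj_zero_zero (hd : 0 ≤ d j) (hS : 0 < Stot adj s j) :
    Dproj adj s d V 0 0 j = d j := by
  have hθ : 0 ≤ theta adj s d j := div_nonneg hd hS.le
  calc Dproj adj s d V 0 0 j = ∑ i ∈ GammaD adj j, s i * theta adj s d j := by
        simp only [Dproj, Pi.zero_apply, sub_zero, gfun_zero hθ]
    _ = Stot adj s j * theta adj s d j := (sum_mul ..).symm
    _ = d j := mul_div_cancel₀ (d j) hS.ne'

theorem le_of_Dproj_le_Dproj (hs : ∀ i, 0 ≤ s i) (hθ : 0 < theta adj s d j) (hV : 0 < V j)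
    {α α' : J → ℝ} {β β' : I → ℝ} (hβ : β ≤ β') (hpos : 0 < Dproj adj s d V α' β' j)
    (hle : Dproj adj s d V α β j ≤ Dproj adj s d V α' β' j) : α j ≤ α' j := by
  obtain ⟨i, -, hi⟩ : ∃ i ∈ GammaD adj j, α j - β i ≤ α' j - β' i :=
    exists_le_of_sum_le_of_strictMonoWherePos
      (fun i _ => (strictMonoWherePos_gfun hθ hV).const_mul (hs i)) hpos hle
  linarith [hβ i]

end DemandSide

section Iteration

variable {adj : I → J → Prop} {s : I → ℝ} {d p V : J → ℝ}

namespace BetaSpec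

variable {α α' : J → ℝ} {i : I} {b b' : ℝ}

theorem sum_le_one (h : BetaSpec adj s d V α i b) :
    ∑ j ∈ GammaS adj i, gfun adj s d V j (α j - b) ≤ 1 := by
  obtain ⟨-, ⟨rfl, hle⟩ | heq⟩ := h
  · simpa only [sub_zero] using hle
  · exact heq.le

theorem sum_eq_one (h : BetaSpec adj s d V α i b) (hb : b ≠ 0) :
    ∑ j ∈ GammaS adj i, gfun adj s d V j (α j - b) = 1 :=
  h.2.resolve_left fun h₀ => hb h₀.1

theorem mono (hθ : ∀ j, 0 < theta adj s d j) (hV : ∀ j, 0 < V j) (hα : α ≤ α')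
    (h : BetaSpec adj s d V α i b) (h' : BetaSpec adj s d V α' i b') : b ≤ b' := by
  obtain rfl | hb := eq_or_ne b 0
  · exact h'.1
  have hsum : ∑ j ∈ GammaS adj i, gfun adj s d V j (α j - b) = 1 := h.sum_eq_one hb
  obtain ⟨j, -, hj⟩ : ∃ j ∈ GammaS adj i, α' j - b' ≤ α j - b :=
    exists_le_of_sum_le_of_strictMonoWherePos
      (fun j _ => strictMonoWherePos_gfun (hθ j) (hV j))
      (hsum ▸ one_pos) (hsum ▸ h'.sum_le_one)
  linarith [hα j]

end BetaSpec

namespace StageOne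

variable {α : ℕ → J → ℝ} {β : ℕ → I → ℝ}

theorem exists_Dproj_eq (h : StageOne adj s d p V α β) (t : ℕ) :
    ∃ a : J → ℝ, (∀ j, Dproj adj s d V a (β t) j = d j) ∧ α (t + 1) = p ⊓ a := by
  choose a hdelivery hα using h.2.2 t
  exact ⟨a, hdelivery, funext hα⟩

theorem beta_le_beta (h : StageOne adj s d p V α β) (hθ : ∀ j, 0 < theta adj s d j)
    (hV : ∀ j, 0 < V j) {t t' : ℕ} (hα : α t ≤ α t') : β t ≤ β t' :=
  fun i => (h.2.1 t i).mono hθ hV hα (h.2.1 t' i)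

theorem alpha_succ_le_alpha_succ (h : StageOne adj s d p V α β) (hs : ∀ i, 0 ≤ s i)
    (hd : ∀ j, 0 < d j) (hV : ∀ j, 0 < V j) (hS : ∀ j, 0 < Stot adj s j) {t t' : ℕ}
    (hβ : β t ≤ β t') : α (t + 1) ≤ α (t' + 1) := by
  obtain ⟨a, ha, hα⟩ := h.exists_Dproj_eq t
  obtain ⟨a', ha', hα'⟩ := h.exists_Dproj_eq t'
  have haa' : a ≤ a' := fun j =>
    le_of_Dproj_le_Dproj hs (theta_pos (hd j) (hS j)) (hV j) hβ
      ((hd j).trans_eq (ha' j).symm) ((ha j).trans (ha' j).symm).le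
  rw [hα, hα']
  exact inf_le_inf_left p haa'

theorem alpha_zero_le_alpha_one (h : StageOne adj s d p V α β) (hs : ∀ i, 0 ≤ s i)
    (hd : ∀ j, 0 < d j) (hp : ∀ j, 0 ≤ p j) (hV : ∀ j, 0 < V j)
    (hS : ∀ j, 0 < Stot adj s j) : α 0 ≤ α 1 := by
  obtain ⟨a, ha, hα⟩ := h.exists_Dproj_eq 0
  have ha_nonneg : 0 ≤ a := fun j =>
    le_of_Dproj_le_Dproj hs (theta_pos (hd j) (hS j)) (hV j) (fun i => (h.2.1 0 i).1)
      ((hd j).trans_eq (ha j).symm) ((Dproj_zero_zero (hd j).le (hS j)).trans (ha j).symm).le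
  calc α 0 = 0 := funext h.1
    _ ≤ p ⊓ a := le_inf hp ha_nonneg
    _ = α 1 := hα.symm

theorem alpha_le_alpha_succ (h : StageOne adj s d p V α β) (hs : ∀ i, 0 ≤ s i)
    (hd : ∀ j, 0 < d j) (hp : ∀ j, 0 ≤ p j) (hV : ∀ j, 0 < V j)
    (hS : ∀ j, 0 < Stot adj s j) (t : ℕ) : α t ≤ α (t + 1) := by
  induction t with
  | zero => exact h.alpha_zero_le_alpha_one hs hd hp hV hS
  | succ t ih =>
    have hβ : β t ≤ β (t + 1) := h.beta_le_beta (fun j => theta_pos (hd j) (hS j)) hV ih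
    exact h.alpha_succ_le_alpha_succ hs hd hV hS hβ

end StageOne

end Iteration

theorem shale_beta_monotone
    (adj : I → J → Prop) (s : I → ℝ) (d p V : J → ℝ)
    (hs : ∀ i, 0 < s i) (hd : ∀ j, 0 < d j) (hp : ∀ j, 0 < p j) (hV : ∀ j, 0 < V j)
    (hS : ∀ j, 0 < Stot adj s j)
    (α : ℕ → J → ℝ) (β : ℕ → I → ℝ) (hstage : StageOne adj s d p V α β) :
    ∀ t i, β t i ≤ β (t + 1) i := by
  intro t
  have hα : α t ≤ α (t + 1) :=
    hstage.alpha_le_alpha_succ (fun i => (hs i).le) hd (fun j => (hp j).le) hV hS t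
  exact hstage.beta_le_beta (fun j => theta_pos (hd j) (hS j)) hV hα

end
end

section
/- Online reconstruction of optimal supply duals from demand duals alone: suppose α : J → ℝ and β* : I → ℝ satisfy (i) 0 ≤ α_j ≤ p_j for all j; (ii) β*_i ≥ 0 and Σ_{j∈Γ(i)} g_{ij}(α_j − β*_i) ≤ 1 for all i, with equality whenever β*_i > 0; (iii) Σ_{i∈Γ(j)} s_i·g_{ij}(α_j − β*_i) ≤ d_j for all j, with equality whenever α_j < p_j. Then for every impression i, β*_i is the unique b ≥ 0 such that either b = 0 and Σ_{j∈Γ(i)} g_{ij}(α_j) ≤ 1, or Σ_{j∈Γ(i)} g_{ij}(α_j − b) = 1; hence the per-impression computation of b from α alone recovers the allocation x_{ij} = g_{ij}(α_j − β*_i). -/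
open Finset Filter Topology

noncomputable section

variable {I J : Type*} [Fintype I] [Fintype J]

/-!
Condition (ii) of KKT at an impression is a scalar complementarity problem
`0 ≤ b ⟂ 1 - ∑ j, g_j (α_j - b) ≥ 0`, and the specification computed online is a reformulation of
it. The load `∑ j, g_j (α_j - b)` is antitone in `b`, and truncation at `0` only destroys strict
monotonicity where a summand vanishes; hence the load takes the positive value `1` at most once,
which makes the solution unique.
-/

section ClearingPrice

variable {R M : Type*}

/-- `b` is a clearing price for the load curve `f` and the capacity `c`: the load fits the capacity,
and a positive price is charged only if the capacity is exhausted. This is complementary slackness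
between the price and the unused capacity. -/
def IsClearingPrice [Zero R] [Preorder R] [LE M] (f : R → M) (c : M) (b : R) : Prop :=
  0 ≤ b ∧ f b ≤ c ∧ (0 < b → f b = c)

theorem isClearingPrice_iff [Zero R] [PartialOrder R] [Preorder M] {f : R → M} {c : M} {b : R} :
    IsClearingPrice f c b ↔ 0 ≤ b ∧ (b = 0 ∧ f 0 ≤ c ∨ f b = c) := by
  refine and_congr_right fun hb => ⟨fun ⟨hle, heq⟩ => ?_, ?_⟩
  · rcases hb.eq_or_lt with rfl | hpos
    · exact Or.inl ⟨rfl, hle⟩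
    · exact Or.inr (heq hpos)
  · rintro (⟨rfl, hle⟩ | heq)
    · exact ⟨hle, fun hpos => absurd hpos (lt_irrefl 0)⟩
    · exact ⟨heq.le, fun _ => heq⟩

theorem IsClearingPrice.eq [Zero R] [LinearOrder R] [PartialOrder M] {f : R → M} {c : M}
    (hf : Antitone f) (hc : (f ⁻¹' {c}).Subsingleton) {a b : R}
    (ha : IsClearingPrice f c a) (hb : IsClearingPrice f c b) : a = b := by
  wlog hab : a ≤ b generalizing a b
  · exact (this hb ha (le_of_not_ge hab)).symm
  rcases hab.eq_or_lt with heq | hlt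
  · exact heq
  have hfb : f b = c := hb.2.2 (ha.1.trans_lt hlt)
  have hfa : f a = c := ha.2.1.antisymm (hfb.symm.trans_le (hf hab))
  exact hc hfa hfb

end ClearingPrice

theorem strictAntiOn_sum_pos {ι R M : Type*} [Preorder R] [AddCommMonoid M] [LinearOrder M]
    [IsOrderedCancelAddMonoid M] {t : Finset ι} {f : ι → R → M} (hf : ∀ i ∈ t, Antitone (f i))
    (hpos : ∀ i ∈ t, StrictAntiOn (f i) {x | 0 < f i x}) :
    StrictAntiOn (fun x => ∑ i ∈ t, f i x) {x | 0 < ∑ i ∈ t, f i x} := by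
  intro x _ y hy hxy
  obtain ⟨i, hi, hiy⟩ : ∃ i ∈ t, 0 < f i y :=
    exists_lt_of_sum_lt (sum_const_zero.trans_lt hy)
  have hix : 0 < f i x := hiy.trans_le (hf i hi hxy.le)
  exact sum_lt_sum (fun k hk => hf k hk hxy.le) ⟨i, hi, hpos i hi hix hiy hxy⟩

section Allocation

variable {adj : I → J → Prop} {s : I → ℝ} {d V : J → ℝ} {i : I} {j : J}

omit [Fintype J] in
theorem gfun_monotone (hθ : 0 ≤ theta adj s d j) (hV : 0 ≤ V j) :
    Monotone (gfun adj s d V j) := by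
  intro x y hxy
  unfold gfun
  gcongr

omit [Fintype J] in
theorem gfun_strictMonoOn_pos (hθ : 0 ≤ theta adj s d j) (hV : 0 < V j) :
    StrictMonoOn (gfun adj s d V j) {z | 0 < gfun adj s d V j z} := by
  intro x hx y _ hxy
  have hx' : 0 < theta adj s d j * (1 + x / V j) := (lt_max_iff.mp hx).resolve_left (lt_irrefl 0)
  have hθ' : 0 < theta adj s d j := hθ.lt_of_ne' (left_ne_zero_of_mul hx'.ne')
  have hlin : theta adj s d j * (1 + x / V j) < theta adj s d j * (1 + y / V j) := by gcongr
  exact max_lt_max_right_iff.mpr ⟨hlin, hx'.trans hlin⟩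

/-- The share of impression `i` allocated to its eligible contracts when its supply dual is `b`:
the left-hand side `∑_{j ∈ Γ(i)} g_{ij}(α_j − b)` of its supply constraint. -/
def impressionLoad (adj : I → J → Prop) (s : I → ℝ) (d V α : J → ℝ) (i : I) (b : ℝ) : ℝ :=
  ∑ j ∈ GammaS adj i, gfun adj s d V j (α j - b)

theorem impressionLoad_antitone (hθ : ∀ j ∈ GammaS adj i, 0 ≤ theta adj s d j)
    (hV : ∀ j ∈ GammaS adj i, 0 ≤ V j) (α : J → ℝ) :
    Antitone (impressionLoad adj s d V α i) :=
  fun _ _ hbc => sum_le_sum fun j hj =>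
    gfun_monotone (hθ j hj) (hV j hj) (sub_le_sub_left hbc (α j))

theorem impressionLoad_strictAntiOn_pos (hθ : ∀ j ∈ GammaS adj i, 0 ≤ theta adj s d j)
    (hV : ∀ j ∈ GammaS adj i, 0 < V j) (α : J → ℝ) :
    StrictAntiOn (impressionLoad adj s d V α i) {b | 0 < impressionLoad adj s d V α i b} :=
  strictAntiOn_sum_pos
    (fun j hj _ _ hbc => gfun_monotone (hθ j hj) (hV j hj).le (sub_le_sub_left hbc (α j)))
    (fun j hj _ hb _ hc hbc =>
      gfun_strictMonoOn_pos (hθ j hj) (hV j hj) hc hb (sub_lt_sub_left hbc (α j)))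

theorem betaSpec_iff_isClearingPrice {α : J → ℝ} {b : ℝ} :
    BetaSpec adj s d V α i b ↔ IsClearingPrice (impressionLoad adj s d V α i) 1 b := by
  simp only [isClearingPrice_iff, BetaSpec, impressionLoad, sub_zero]

end Allocation

theorem online_beta_reconstruction_general (adj : I → J → Prop) (s : I → ℝ) (d V α : J → ℝ) (i : I)
    (hd : ∀ j ∈ GammaS adj i, 0 ≤ d j) (hV : ∀ j ∈ GammaS adj i, 0 < V j)
    (hS : ∀ j ∈ GammaS adj i, 0 < Stot adj s j) {β : ℝ}
    (hβ : IsClearingPrice (impressionLoad adj s d V α i) 1 β) (b : ℝ) :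
    BetaSpec adj s d V α i b ↔ b = β := by
  have hθ : ∀ j ∈ GammaS adj i, 0 ≤ theta adj s d j := fun j hj => div_nonneg (hd j hj) (hS j hj).le
  have hanti : Antitone (impressionLoad adj s d V α i) :=
    impressionLoad_antitone hθ (fun j hj => (hV j hj).le) α
  have hlevel : (impressionLoad adj s d V α i ⁻¹' {1}).Subsingleton := fun x hx y hy =>
    (impressionLoad_strictAntiOn_pos hθ hV α).injOn
      (zero_lt_one.trans_eq hx.symm) (zero_lt_one.trans_eq hy.symm) (hx.trans hy.symm)
  rw [betaSpec_iff_isClearingPrice]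
  exact ⟨fun hb => hb.eq hanti hlevel hβ, fun hb => hb ▸ hβ⟩

theorem online_beta_reconstruction
    (adj : I → J → Prop) (s : I → ℝ) (d p V : J → ℝ)
    (hs : ∀ i, 0 < s i) (hd : ∀ j, 0 < d j) (hp : ∀ j, 0 < p j) (hV : ∀ j, 0 < V j)
    (hS : ∀ j, 0 < Stot adj s j)
    (α : J → ℝ) (βs : I → ℝ) (hkkt : KKT adj s d p V α βs) :
    ∀ i b, BetaSpec adj s d V α i b ↔ b = βs i := by
  exact fun i => online_beta_reconstruction_general adj s d V α i (fun j _ => (hd j).le)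
    (fun j _ => hV j) (fun j _ => hS j) (hkkt.2.1 i)

end
end
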